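/- Let B be the open ball of radius ρ > 0 centered at the origin in ℝ², and let u : ℝ² → ℂ be twice continuously differentiable on the closed ball B̄ with u(x) = 0 for every x on the boundary sphere {x : |x| = ρ}. If k ∈ ℂ with Im k ≠ 0 and Δu + k²u = 0 on B, then u = 0 on B̄. (Non-real k is not a Dirichlet eigenvalue of −Δ on the ball.) -/

import Mathlib

/-- The Laplacian of a complex-valued function on `ℝ²`. -/
noncomputable def laplacian2 (u : EuclideanSpace ℝ (Fin 2) → ℂ)
    (x : EuclideanSpace ℝ (Fin 2)) : ℂ :=
  ∑ i : Fin 2,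
    fderiv ℝ (fun y => fderiv ℝ u y (EuclideanSpace.single i (1 : ℝ))) x
      (EuclideanSpace.single i (1 : ℝ))

/-!
A nonzero Dirichlet eigenfunction forces its eigenvalue `c = k ^ 2` to be a nonnegative real, as the
energy identity `∫ |∇u|² = c ∫ |u|²` shows; and `0 ≤ k ^ 2` only when `k` is real. To integrate by
parts without any regularity of the boundary, restrict to the set where `u ≠ 0` and test the
equation against `χ_ε ū`, where `χ_ε = σ(2 + ε log |u|²)` with `σ` the standard smooth step. This
cutoff vanishes near the boundary because `u` does, and tends to `1` as `ε → 0`. The error term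
`∫ ū ⟨∇χ_ε, ∇u⟩` has nonnegative real part, which bounds `∫ χ_ε |∇u|²` uniformly in `ε`; and since
`χ_{ε/2} = 1` wherever `∇χ_ε ≠ 0`, its modulus is at most a constant times `ε ∫ χ_{ε/2} |∇u|²`,
hence tends to `0`.
-/

open MeasureTheory Set Filter Topology Bornology
open Real (smoothTransition)
open scoped ComplexOrder ComplexConjugate Laplacian

theorem integrableOn_of_eqOn_zero_diff {X G : Type*} [TopologicalSpace X] [T2Space X]
    [MeasurableSpace X] [OpensMeasurableSpace X] [NormedAddCommGroup G] {μ : Measure X}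
    [IsFiniteMeasureOnCompacts μ] {U K : Set X} {F : X → G} (hU : IsOpen U) (hK : IsCompact K)
    (hKU : K ⊆ U) (hF : ContinuousOn F U) (hF0 : ∀ x ∈ U \ K, F x = 0) : IntegrableOn F U μ :=
  ((hF.mono hKU).integrableOn_compact' hK hK.measurableSet).of_forall_sdiff_eq_zero
    hU.measurableSet hF0

section CompactlySupportedDerivatives

variable {E G : Type*} [NormedAddCommGroup E] [NormedSpace ℝ E]
  [NormedAddCommGroup G] [NormedSpace ℝ G] {U K : Set E} {F : E → G}

theorem fderiv_eq_zero_of_eqOn_zero_diff (hU : IsOpen U) (hK : IsClosed K)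
    (hF : ∀ x ∈ U \ K, F x = 0) {x : E} (hx : x ∈ U \ K) : fderiv ℝ F x = 0 := by
  have hFx : F =ᶠ[𝓝 x] fun _ ↦ 0 := eventually_of_mem ((hU.sdiff hK).mem_nhds hx) hF
  rw [hFx.fderiv_eq, fderiv_const_apply]

theorem contDiff_indicator_of_eqOn_zero_diff {n : WithTop ℕ∞} (hU : IsOpen U) (hK : IsClosed K)
    (hKU : K ⊆ U) (hF : ContDiffOn ℝ n F U) (hF0 : ∀ x ∈ U \ K, F x = 0) :
    ContDiff ℝ n (U.indicator F) := by
  refine contDiff_iff_contDiffAt.2 fun x ↦ ?_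
  by_cases hx : x ∈ U
  · exact (hF.contDiffAt (hU.mem_nhds hx)).congr_of_eventuallyEq
      (eqOn_indicator.eventuallyEq_of_mem (hU.mem_nhds hx))
  · have hxK : Kᶜ ∈ 𝓝 x := hK.isOpen_compl.mem_nhds fun hxK ↦ hx (hKU hxK)
    refine (contDiffAt_const (c := (0 : G))).congr_of_eventuallyEq (eventually_of_mem hxK ?_)
    intro y hy
    exact indicator_apply_eq_zero.2 fun hyU ↦ hF0 y ⟨hyU, hy⟩

variable [FiniteDimensional ℝ E] [MeasurableSpace E] [BorelSpace E] {μ : Measure E}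
  [μ.IsAddHaarMeasure]

theorem integral_fderiv_apply_eq_zero (hF : ContDiff ℝ 1 F) (hFc : HasCompactSupport F) (v : E) :
    ∫ x, fderiv ℝ F x v ∂μ = 0 := by
  have hF' : Continuous fun x ↦ fderiv ℝ F x v :=
    (hF.continuous_fderiv one_ne_zero).clm_apply continuous_const
  simpa using integral_smul_fderiv_eq_neg_fderiv_smul_of_integrable (μ := μ) (v := v)
    (f := fun _ ↦ (1 : ℝ)) (g := F) (by simp)
    (by simpa using hF'.integrable_of_hasCompactSupport (hFc.fderiv_apply ℝ v))
    (by simpa using hF.continuous.integrable_of_hasCompactSupport hFc)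
    (fun _ _ ↦ differentiableAt_const _) (fun x _ ↦ hF.differentiable one_ne_zero x)

theorem setIntegral_fderiv_apply_eq_zero (hU : IsOpen U) (hK : IsCompact K) (hKU : K ⊆ U)
    (hF : ContDiffOn ℝ 1 F U) (hF0 : ∀ x ∈ U \ K, F x = 0) (v : E) :
    ∫ x in U, fderiv ℝ F x v ∂μ = 0 := by
  have hcontDiff := contDiff_indicator_of_eqOn_zero_diff hU hK.isClosed hKU hF hF0
  have hzero : ∀ x ∉ K, U.indicator F x = 0 := fun x hx ↦
    indicator_apply_eq_zero.2 fun hxU ↦ hF0 x ⟨hxU, hx⟩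
  have hfderiv : EqOn (fun x ↦ fderiv ℝ F x v) (fun x ↦ fderiv ℝ (U.indicator F) x v) U :=
    fun x hx ↦ by
      simp only [(eqOn_indicator.eventuallyEq_of_mem (hU.mem_nhds hx)).fderiv_eq]
  rw [setIntegral_congr_fun hU.measurableSet hfderiv,
    setIntegral_eq_integral_of_forall_compl_eq_zero]
  · exact integral_fderiv_apply_eq_zero hcontDiff (HasCompactSupport.intro hK hzero) v
  · intro x hx
    rw [fderiv_eq_zero_of_eqOn_zero_diff isOpen_univ hK.isClosed (fun y hy ↦ hzero y hy.2)
      ⟨mem_univ x, fun hxK ↦ hx (hKU hxK)⟩, zero_apply]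

end CompactlySupportedDerivatives

theorem laplacian_eq_sum_fderiv_fderiv {E F ι : Type*} [NormedAddCommGroup E]
    [InnerProductSpace ℝ E] [FiniteDimensional ℝ E] [NormedAddCommGroup F] [NormedSpace ℝ F]
    [Fintype ι] {f : E → F} {x : E} (hf : ContDiffAt ℝ 2 f x) (b : OrthonormalBasis ι ℝ E) :
    Δ f x = ∑ i, fderiv ℝ (fun y ↦ fderiv ℝ f y (b i)) x (b i) := by
  have hf' : DifferentiableAt ℝ (fderiv ℝ f) x :=
    (hf.fderiv_right (m := 1) one_add_one_eq_two.le).differentiableAt one_ne_zero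
  simp [InnerProductSpace.laplacian_eq_iteratedFDeriv_orthonormalBasis f b,
    iteratedFDeriv_two_apply, fderiv_clm_apply hf' (differentiableAt_const _)]

theorem laplacian2_eq_laplacian {u : EuclideanSpace ℝ (Fin 2) → ℂ} {x : EuclideanSpace ℝ (Fin 2)}
    (hu : ContDiffAt ℝ 2 u x) : laplacian2 u x = Δ u x := by
  simp [laplacian2, laplacian_eq_sum_fderiv_fderiv hu (EuclideanSpace.basisFun (Fin 2) ℝ)]

theorem deriv_smoothTransition_of_nonpos {s : ℝ} (hs : s ≤ 0) :
    deriv smoothTransition s = 0 := by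
  refine IsLocalMin.deriv_eq_zero (Eventually.of_forall fun t ↦ ?_)
  rw [Real.smoothTransition.zero_of_nonpos hs]
  exact Real.smoothTransition.nonneg t

theorem deriv_smoothTransition_of_one_le {s : ℝ} (hs : 1 ≤ s) :
    deriv smoothTransition s = 0 := by
  refine IsLocalMax.deriv_eq_zero (Eventually.of_forall fun t ↦ ?_)
  rw [Real.smoothTransition.one_of_one_le hs]
  exact Real.smoothTransition.le_one t

/-- When `s = 2 + ε log |z|²` is the argument of `σ` in `χ_ε`, that in `χ_{ε/2}` is `1 + s / 2`. -/
theorem exists_deriv_smoothTransition_le :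
    ∃ M, 0 ≤ M ∧ ∀ s : ℝ, deriv smoothTransition s ≤ M * smoothTransition (1 + s / 2) := by
  obtain ⟨M, hM⟩ := (isCompact_Icc (a := (0 : ℝ)) (b := 1)).exists_bound_of_continuousOn
    (Real.smoothTransition.contDiff.continuous_deriv le_rfl).continuousOn
  have hM0 : 0 ≤ M := (norm_nonneg _).trans (hM 0 ⟨le_rfl, zero_le_one⟩)
  refine ⟨M, hM0, fun s ↦ ?_⟩
  have hnonneg : 0 ≤ M * smoothTransition (1 + s / 2) :=
    mul_nonneg hM0 (Real.smoothTransition.nonneg _)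
  rcases le_or_gt s 0 with hs0 | hs0
  · rwa [deriv_smoothTransition_of_nonpos hs0]
  rcases le_or_gt 1 s with hs1 | hs1
  · rwa [deriv_smoothTransition_of_one_le hs1]
  rw [Real.smoothTransition.one_of_one_le (by linarith), mul_one]
  exact (le_abs_self _).trans (hM s ⟨hs0.le, hs1.le⟩)

/-- The logarithmic cutoff `σ(2 + ε log |z|²)`, with `σ` the standard smooth step; composed with `u`
it cuts off a neighbourhood of the zeros of `u`. Since `Real.log 0 = 0`, its value at `z = 0` is the
meaningless `1`, so it is only applied where `u ≠ 0`. -/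
noncomputable def logCutoff (ε : ℝ) (z : ℂ) : ℝ :=
  smoothTransition (2 + ε * Real.log (‖z‖ ^ 2))

theorem logCutoff_nonneg (ε : ℝ) (z : ℂ) : 0 ≤ logCutoff ε z :=
  Real.smoothTransition.nonneg _

theorem logCutoff_le_one (ε : ℝ) (z : ℂ) : logCutoff ε z ≤ 1 :=
  Real.smoothTransition.le_one _

theorem logCutoff_eq_zero {ε : ℝ} {z : ℂ} (hε : 0 < ε) (hz : z ≠ 0)
    (hzε : ‖z‖ ^ 2 ≤ Real.exp (-(2 / ε))) : logCutoff ε z = 0 := by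
  refine Real.smoothTransition.zero_of_nonpos ?_
  have hlog : Real.log (‖z‖ ^ 2) ≤ -(2 / ε) := by
    rwa [Real.log_le_iff_le_exp (by positivity)]
  have hmul : ε * Real.log (‖z‖ ^ 2) ≤ ε * -(2 / ε) := by gcongr
  have hcancel : ε * -(2 / ε) = -2 := by field_simp
  linarith

theorem tendsto_logCutoff (z : ℂ) : Tendsto (fun ε ↦ logCutoff ε z) (𝓝[>] 0) (𝓝 1) := by
  have hcont : Continuous fun ε ↦ logCutoff ε z :=
    Real.smoothTransition.continuous.comp (by fun_prop)
  have hzero : logCutoff 0 z = 1 := Real.smoothTransition.one_of_one_le (by norm_num)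
  exact hzero ▸ (hcont.tendsto 0).mono_left nhdsWithin_le_nhds

theorem contDiffAt_logCutoff {ε : ℝ} {n : ℕ∞} {z : ℂ} (hz : z ≠ 0) :
    ContDiffAt ℝ n (logCutoff ε) z :=
  Real.smoothTransition.contDiffAt.comp z <|
    contDiffAt_const.add <| contDiffAt_const.mul <|
      (contDiffAt_id.norm_sq ℝ).log (by simpa using hz)

section NodalDomain

variable {E : Type*} [NormedAddCommGroup E] [NormedSpace ℝ E] {u : E → ℂ} {U : Set E} {x : E}
  {ε : ℝ}

theorem fderiv_logCutoff_comp_apply (ε : ℝ) (hu : DifferentiableAt ℝ u x) (hx : u x ≠ 0) (v : E) :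
    fderiv ℝ (fun y ↦ logCutoff ε (u y)) x v =
      deriv smoothTransition (2 + ε * Real.log (‖u x‖ ^ 2)) *
        (2 * ε * (conj (u x) * fderiv ℝ u x v).re / ‖u x‖ ^ 2) := by
  have hσ := ((Real.smoothTransition.contDiffAt (n := 1)).differentiableAt one_ne_zero).hasDerivAt
    (x := 2 + ε * Real.log (‖u x‖ ^ 2))
  have hlog := (hu.hasFDerivAt.norm_sq.log (by simpa using hx)).const_mul ε |>.const_add 2
  have hχ : HasFDerivAt (fun y ↦ logCutoff ε (u y)) _ x := hσ.comp_hasFDerivAt x hlog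
  rw [hχ.fderiv, mul_comm (conj (u x))]
  simp only [smul_apply, ContinuousLinearMap.comp_apply,
    innerSL_apply_apply, Complex.inner, smul_eq_mul, nsmul_eq_mul]
  ring

theorem fderiv_cutoff_flux_apply {χ : E → ℝ} (hχ : DifferentiableAt ℝ χ x)
    (hu : ContDiffAt ℝ 2 u x) (v : E) :
    fderiv ℝ (fun y ↦ χ y • (conj (u y) * fderiv ℝ u y v)) x v =
      χ x • ((‖fderiv ℝ u x v‖ ^ 2 : ℝ) +
          conj (u x) * fderiv ℝ (fun y ↦ fderiv ℝ u y v) x v) +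
        fderiv ℝ χ x v • (conj (u x) * fderiv ℝ u x v) := by
  have hux : HasFDerivAt u (fderiv ℝ u x) x := (hu.differentiableAt two_ne_zero).hasFDerivAt
  have hduv : DifferentiableAt ℝ (fun y ↦ fderiv ℝ u y v) x :=
    ((hu.fderiv_right (m := 1) one_add_one_eq_two.le).differentiableAt one_ne_zero).clm_apply
      (differentiableAt_const v)
  have hconj := Complex.conjCLE.toContinuousLinearMap.hasFDerivAt.comp x hux
  have hflux := hχ.hasFDerivAt.smul (hconj.mul hduv.hasFDerivAt)
  have hnorm : ((‖fderiv ℝ u x v‖ ^ 2 : ℝ) : ℂ) = fderiv ℝ u x v * conj (fderiv ℝ u x v) := by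
    rw [Complex.mul_conj, Complex.normSq_eq_norm_sq]
  rw [hnorm]
  refine (congrArg (· v) hflux.fderiv).trans ?_
  simp only [ContinuousLinearEquiv.coe_coe, ContinuousAlgEquiv.coe_coeCLE, Function.comp_apply,
    Complex.conjCAE_apply, smul_add, Pi.mul_apply, add_apply, smul_apply, smul_eq_mul,
    Complex.real_smul, ContinuousLinearMap.comp_apply, ContinuousAlgEquiv.coeCLE_apply,
    ContinuousLinearMap.smulRight_apply]
  ring

/-- A bounded open set `U` on which `u` is `C²` and has no zeros, with `u` vanishing continuously on
the boundary. Unlike in the usual notion of nodal domain, `U` need not be connected. -/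
structure IsNodalDomain (u : E → ℂ) (U : Set E) : Prop where
  isOpen : IsOpen U
  isBounded : IsBounded U
  contDiffOn : ContDiffOn ℝ 2 u U
  continuousOn : ContinuousOn u (closure U)
  ne_zero : ∀ x ∈ U, u x ≠ 0
  eq_zero_of_mem_frontier : ∀ x ∈ frontier U, u x = 0

theorem isNodalDomain_setOf_ne_zero {Ω : Set E} (hΩ : IsOpen Ω) (hΩb : IsBounded Ω)
    (hu : ContDiffOn ℝ 2 u Ω) (huc : ContinuousOn u (closure Ω))
    (hu0 : ∀ x ∈ frontier Ω, u x = 0) : IsNodalDomain u {x ∈ Ω | u x ≠ 0} where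
  isOpen := hu.continuousOn.isOpen_inter_preimage hΩ isOpen_ne
  isBounded := hΩb.subset (sep_subset _ _)
  contDiffOn := hu.mono (sep_subset _ _)
  continuousOn := huc.mono (closure_mono (sep_subset _ _))
  ne_zero _ hx := hx.2
  eq_zero_of_mem_frontier x hx := by
    have hopen : IsOpen {x ∈ Ω | u x ≠ 0} := hu.continuousOn.isOpen_inter_preimage hΩ isOpen_ne
    rw [hopen.frontier_eq] at hx
    by_contra hux
    have hxΩ : x ∉ Ω := fun hxΩ ↦ hx.2 ⟨hxΩ, hux⟩
    exact hux (hu0 x (hΩ.frontier_eq ▸ ⟨closure_mono (sep_subset _ _) hx.1, hxΩ⟩))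

namespace IsNodalDomain

theorem contDiffAt (h : IsNodalDomain u U) (hx : x ∈ U) : ContDiffAt ℝ 2 u x :=
  h.contDiffOn.contDiffAt (h.isOpen.mem_nhds hx)

theorem differentiableAt (h : IsNodalDomain u U) (hx : x ∈ U) : DifferentiableAt ℝ u x :=
  (h.contDiffAt hx).differentiableAt two_ne_zero

theorem contDiffOn_logCutoff (h : IsNodalDomain u U) (ε : ℝ) :
    ContDiffOn ℝ 1 (fun x ↦ logCutoff ε (u x)) U := fun x hx ↦
  ((contDiffAt_logCutoff (h.ne_zero x hx)).comp x
    ((h.contDiffAt hx).of_le one_le_two)).contDiffWithinAt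

theorem contDiffOn_fderiv_apply (h : IsNodalDomain u U) (v : E) :
    ContDiffOn ℝ 1 (fun x ↦ fderiv ℝ u x v) U :=
  (h.contDiffOn.fderiv_of_isOpen h.isOpen one_add_one_eq_two.le).clm_apply contDiffOn_const

variable [ProperSpace E]

theorem exists_isCompact_logCutoff_eq_zero (h : IsNodalDomain u U) (hε : 0 < ε) :
    ∃ K ⊆ U, IsCompact K ∧ ∀ x ∈ U \ K, logCutoff ε (u x) = 0 := by
  set K := closure U ∩ (fun x ↦ ‖u x‖ ^ 2) ⁻¹' Ici (Real.exp (-(2 / ε)))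
  have hKclosed : IsClosed K :=
    (h.continuousOn.norm.pow 2).preimage_isClosed_of_isClosed isClosed_closure isClosed_Ici
  refine ⟨K, fun x hx ↦ ?_, h.isBounded.isCompact_closure.of_isClosed_subset hKclosed
    inter_subset_left, fun x hx ↦ ?_⟩
  · by_contra hxU
    have hux : u x = 0 := h.eq_zero_of_mem_frontier x (h.isOpen.frontier_eq ▸ ⟨hx.1, hxU⟩)
    have hexp : Real.exp (-(2 / ε)) ≤ ‖u x‖ ^ 2 := hx.2
    rw [hux, norm_zero, zero_pow two_ne_zero] at hexp
    exact (Real.exp_pos _).not_ge hexp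
  · refine logCutoff_eq_zero hε (h.ne_zero x hx.1) (le_of_not_ge fun hexp ↦ hx.2 ?_)
    exact ⟨subset_closure hx.1, hexp⟩

variable [MeasurableSpace E] [BorelSpace E] {μ : Measure E} [IsFiniteMeasureOnCompacts μ]

theorem integrableOn_logCutoff_mul (h : IsNodalDomain u U) (hε : 0 < ε) {g : E → ℝ}
    (hg : ContinuousOn g U) : IntegrableOn (fun x ↦ logCutoff ε (u x) * g x) U μ := by
  obtain ⟨K, hKU, hK, hχ⟩ := h.exists_isCompact_logCutoff_eq_zero hε
  exact integrableOn_of_eqOn_zero_diff h.isOpen hK hKU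
    ((h.contDiffOn_logCutoff ε).continuousOn.mul hg) fun x hx ↦ by rw [hχ x hx, zero_mul]

theorem integrableOn_norm_sq (h : IsNodalDomain u U) : IntegrableOn (fun x ↦ ‖u x‖ ^ 2) U μ :=
  ((h.continuousOn.norm.pow 2).integrableOn_compact h.isBounded.isCompact_closure).mono_set
    subset_closure

theorem tendsto_setIntegral_logCutoff_mul_norm_sq (h : IsNodalDomain u U) :
    Tendsto (fun ε ↦ ∫ x in U, logCutoff ε (u x) * ‖u x‖ ^ 2 ∂μ) (𝓝[>] 0)
      (𝓝 (∫ x in U, ‖u x‖ ^ 2 ∂μ)) := by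
  refine tendsto_integral_filter_of_dominated_convergence (fun x ↦ ‖u x‖ ^ 2) ?_ ?_
    h.integrableOn_norm_sq (ae_of_all _ fun x ↦ ?_)
  · filter_upwards [self_mem_nhdsWithin] with ε hε
    exact (h.integrableOn_logCutoff_mul hε
      (h.contDiffOn.continuousOn.norm.pow 2)).aestronglyMeasurable
  · refine Eventually.of_forall fun ε ↦ ae_of_all _ fun x ↦ ?_
    rw [Real.norm_of_nonneg (mul_nonneg (logCutoff_nonneg ε _) (sq_nonneg _))]
    exact mul_le_of_le_one_left (sq_nonneg _) (logCutoff_le_one ε _)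
  · simpa using (tendsto_logCutoff (u x)).mul_const (‖u x‖ ^ 2)

theorem setIntegral_norm_sq_pos [μ.IsOpenPosMeasure] (h : IsNodalDomain u U) (hU : U.Nonempty) :
    0 < ∫ x in U, ‖u x‖ ^ 2 ∂μ := by
  have hsupport : U ⊆ Function.support fun x ↦ ‖u x‖ ^ 2 := fun x hx ↦
    pow_ne_zero 2 (norm_ne_zero_iff.2 (h.ne_zero x hx))
  rw [setIntegral_pos_iff_support_of_nonneg_ae (ae_of_all _ fun x ↦ sq_nonneg ‖u x‖)
    h.integrableOn_norm_sq, inter_eq_right.2 hsupport]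
  exact h.isOpen.measure_pos μ hU

end IsNodalDomain

end NodalDomain

section Energy

variable {E : Type*} [NormedAddCommGroup E] [InnerProductSpace ℝ E] [FiniteDimensional ℝ E]
  {u : E → ℂ} {U : Set E} {x : E} {ε : ℝ} {c : ℂ}

/-- The energy density `|∇u|²` of a complex-valued function. -/
noncomputable def energyDensity (u : E → ℂ) (x : E) : ℝ :=
  ∑ i, ‖fderiv ℝ u x (stdOrthonormalBasis ℝ E i)‖ ^ 2

/-- The term `ū ⟨∇χ_ε, ∇u⟩`, with `χ_ε` the logarithmic cutoff of `u`: the error that the cutoff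
causes in the energy identity. -/
noncomputable def cutoffDefect (ε : ℝ) (u : E → ℂ) (x : E) : ℂ :=
  ∑ i, fderiv ℝ (fun y ↦ logCutoff ε (u y)) x (stdOrthonormalBasis ℝ E i) •
    (conj (u x) * fderiv ℝ u x (stdOrthonormalBasis ℝ E i))

theorem energyDensity_nonneg (u : E → ℂ) (x : E) : 0 ≤ energyDensity u x :=
  Finset.sum_nonneg fun _ _ ↦ sq_nonneg _

theorem re_cutoffDefect_nonneg (hε : 0 ≤ ε) (hu : DifferentiableAt ℝ u x) (hx : u x ≠ 0) :
    0 ≤ (cutoffDefect ε u x).re := by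
  rw [cutoffDefect, Complex.re_sum]
  refine Finset.sum_nonneg fun i _ ↦ ?_
  set w := conj (u x) * fderiv ℝ u x (stdOrthonormalBasis ℝ E i) with hw
  have hσ := Real.smoothTransition.monotone.deriv_nonneg (x := 2 + ε * Real.log (‖u x‖ ^ 2))
  rw [fderiv_logCutoff_comp_apply ε hu hx, Complex.smul_re, ← hw, smul_eq_mul]
  calc 0 ≤ deriv smoothTransition (2 + ε * Real.log (‖u x‖ ^ 2)) *
        (2 * ε * w.re ^ 2 / ‖u x‖ ^ 2) := by positivity
    _ = _ := by ring

theorem norm_cutoffDefect_le (hε : 0 ≤ ε) (hu : DifferentiableAt ℝ u x) (hx : u x ≠ 0) :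
    ‖cutoffDefect ε u x‖ ≤
      2 * ε * deriv smoothTransition (2 + ε * Real.log (‖u x‖ ^ 2)) * energyDensity u x := by
  rw [cutoffDefect, energyDensity, Finset.mul_sum]
  refine (norm_sum_le _ _).trans (Finset.sum_le_sum fun i _ ↦ ?_)
  set v := stdOrthonormalBasis ℝ E i
  set w := conj (u x) * fderiv ℝ u x v with hw
  set σ' := deriv smoothTransition (2 + ε * Real.log (‖u x‖ ^ 2))
  have hσ' : 0 ≤ σ' := Real.smoothTransition.monotone.deriv_nonneg
  have hnorm : ‖w‖ = ‖u x‖ * ‖fderiv ℝ u x v‖ := by rw [hw, norm_mul, RCLike.norm_conj]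
  have hu0 : ‖u x‖ ≠ 0 := norm_ne_zero_iff.2 hx
  rw [fderiv_logCutoff_comp_apply ε hu hx, norm_smul, ← hw, Real.norm_eq_abs, abs_mul, abs_div,
    abs_mul, abs_of_nonneg hσ', abs_of_nonneg (by positivity : 0 ≤ 2 * ε),
    abs_of_nonneg (sq_nonneg ‖u x‖)]
  calc σ' * (2 * ε * |w.re| / ‖u x‖ ^ 2) * ‖w‖
      ≤ σ' * (2 * ε * ‖w‖ / ‖u x‖ ^ 2) * ‖w‖ := by gcongr; exact Complex.abs_re_le_norm w
    _ = 2 * ε * σ' * ‖fderiv ℝ u x v‖ ^ 2 := by rw [hnorm]; field_simp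

theorem sum_fderiv_cutoff_flux (hu : ContDiffAt ℝ 2 u x) (hx : u x ≠ 0)
    (hΔ : Δ u x = -(c * u x)) :
    ∑ i, fderiv ℝ (fun y ↦ logCutoff ε (u y) •
        (conj (u y) * fderiv ℝ u y (stdOrthonormalBasis ℝ E i))) x (stdOrthonormalBasis ℝ E i) =
      ((logCutoff ε (u x) * energyDensity u x : ℝ) + cutoffDefect ε u x) -
        c * (logCutoff ε (u x) * ‖u x‖ ^ 2 : ℝ) := by
  have hχ : DifferentiableAt ℝ (fun y ↦ logCutoff ε (u y)) x :=
    ((contDiffAt_logCutoff (n := 1) hx).differentiableAt one_ne_zero).comp x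
      (hu.differentiableAt two_ne_zero)
  have hnorm : ((‖u x‖ ^ 2 : ℝ) : ℂ) = u x * conj (u x) := by
    rw [Complex.mul_conj, Complex.normSq_eq_norm_sq]
  simp only [fderiv_cutoff_flux_apply hχ hu]
  rw [Finset.sum_add_distrib, ← Finset.smul_sum, Finset.sum_add_distrib, ← Finset.mul_sum,
    ← laplacian_eq_sum_fderiv_fderiv hu, hΔ, ← Complex.ofReal_sum, ← energyDensity, ← cutoffDefect,
    Complex.real_smul, Complex.ofReal_mul, Complex.ofReal_mul, hnorm]
  ring

namespace IsNodalDomain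

theorem continuousOn_energyDensity (h : IsNodalDomain u U) : ContinuousOn (energyDensity u) U :=
  continuousOn_finsetSum _ fun i _ ↦
    (h.contDiffOn_fderiv_apply (stdOrthonormalBasis ℝ E i)).continuousOn.norm.pow 2

variable [MeasurableSpace E] [BorelSpace E]

theorem integrableOn_cutoffDefect (h : IsNodalDomain u U) (hε : 0 < ε) :
    IntegrableOn (cutoffDefect ε u) U := by
  obtain ⟨K, hKU, hK, hχ⟩ := h.exists_isCompact_logCutoff_eq_zero hε
  refine integrableOn_of_eqOn_zero_diff h.isOpen hK hKU ?_ fun x hx ↦ ?_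
  · have hdχ := (h.contDiffOn_logCutoff ε).continuousOn_fderiv_of_isOpen h.isOpen le_rfl
    have hconj := Complex.continuous_conj.comp_continuousOn h.contDiffOn.continuousOn
    exact continuousOn_finsetSum _ fun i _ ↦ (hdχ.clm_apply continuousOn_const).smul
      (hconj.mul (h.contDiffOn_fderiv_apply _).continuousOn)
  · simp [cutoffDefect, fderiv_eq_zero_of_eqOn_zero_diff h.isOpen hK.isClosed hχ hx]

theorem setIntegral_sum_fderiv_cutoff_flux (h : IsNodalDomain u U) (hε : 0 < ε) :
    ∫ x in U, ∑ i, fderiv ℝ (fun y ↦ logCutoff ε (u y) •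
        (conj (u y) * fderiv ℝ u y (stdOrthonormalBasis ℝ E i))) x
          (stdOrthonormalBasis ℝ E i) = 0 := by
  obtain ⟨K, hKU, hK, hχ⟩ := h.exists_isCompact_logCutoff_eq_zero hε
  set flux : Fin (Module.finrank ℝ E) → E → ℂ := fun i y ↦ logCutoff ε (u y) •
    (conj (u y) * fderiv ℝ u y (stdOrthonormalBasis ℝ E i))
  have hflux (i) : ContDiffOn ℝ 1 (flux i) U :=
    (h.contDiffOn_logCutoff ε).smul <|
      (Complex.conjCLE.contDiff.comp_contDiffOn (h.contDiffOn.of_le one_le_two)).mul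
        (h.contDiffOn_fderiv_apply _)
  have hflux0 (i) : ∀ x ∈ U \ K, flux i x = 0 := fun x hx ↦ by
    simp only [flux, hχ x hx, zero_smul]
  have hint (i) (v : E) : IntegrableOn (fun x ↦ fderiv ℝ (flux i) x v) U :=
    integrableOn_of_eqOn_zero_diff h.isOpen hK hKU
      (((hflux i).continuousOn_fderiv_of_isOpen h.isOpen le_rfl).clm_apply continuousOn_const)
      fun x hx ↦ by
        rw [fderiv_eq_zero_of_eqOn_zero_diff h.isOpen hK.isClosed (hflux0 i) hx, zero_apply]
  rw [integral_finsetSum _ fun i _ ↦ hint i _]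
  exact Finset.sum_eq_zero fun i _ ↦
    setIntegral_fderiv_apply_eq_zero h.isOpen hK hKU (hflux i) (hflux0 i) _

theorem energy_identity (h : IsNodalDomain u U) (hε : 0 < ε)
    (hΔ : ∀ x ∈ U, Δ u x = -(c * u x)) :
    (∫ x in U, logCutoff ε (u x) * energyDensity u x : ℝ) + ∫ x in U, cutoffDefect ε u x =
      c * (∫ x in U, logCutoff ε (u x) * ‖u x‖ ^ 2 : ℝ) := by
  have henergy : IntegrableOn (fun x ↦ (↑(logCutoff ε (u x) * energyDensity u x) : ℂ)) U :=
    (h.integrableOn_logCutoff_mul hε h.continuousOn_energyDensity).ofReal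
  have hmass : IntegrableOn (fun x ↦ c * (↑(logCutoff ε (u x) * ‖u x‖ ^ 2) : ℂ)) U :=
    (h.integrableOn_logCutoff_mul hε (h.contDiffOn.continuousOn.norm.pow 2)).ofReal.const_mul c
  have hdefect := h.integrableOn_cutoffDefect hε
  rw [← sub_eq_zero, ← h.setIntegral_sum_fderiv_cutoff_flux hε,
    setIntegral_congr_fun h.isOpen.measurableSet fun x hx ↦
      sum_fderiv_cutoff_flux (h.contDiffAt hx) (h.ne_zero x hx) (hΔ x hx),
    integral_sub (by exact henergy.add hdefect) hmass, integral_add henergy hdefect,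
    integral_const_mul]
  simp only [integral_complex_ofReal]

theorem setIntegral_logCutoff_mul_energyDensity_le (h : IsNodalDomain u U) (hε : 0 < ε)
    (hΔ : ∀ x ∈ U, Δ u x = -(c * u x)) :
    ∫ x in U, logCutoff ε (u x) * energyDensity u x ≤ ‖c‖ * ∫ x in U, ‖u x‖ ^ 2 := by
  have hre := congrArg Complex.re (h.energy_identity hε hΔ)
  rw [Complex.add_re, Complex.ofReal_re, Complex.re_mul_ofReal] at hre
  have hdefect : 0 ≤ (∫ x in U, cutoffDefect ε u x).re := by
    have hre_integral : ∫ x in U, (cutoffDefect ε u x).re = (∫ x in U, cutoffDefect ε u x).re :=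
      integral_re (h.integrableOn_cutoffDefect hε)
    rw [← hre_integral]
    exact setIntegral_nonneg h.isOpen.measurableSet fun x hx ↦
      re_cutoffDefect_nonneg hε.le (h.differentiableAt hx) (h.ne_zero x hx)
  have hmass_nonneg : 0 ≤ ∫ x in U, logCutoff ε (u x) * ‖u x‖ ^ 2 :=
    integral_nonneg fun x ↦ mul_nonneg (logCutoff_nonneg ε _) (sq_nonneg _)
  calc ∫ x in U, logCutoff ε (u x) * energyDensity u x
      ≤ c.re * ∫ x in U, logCutoff ε (u x) * ‖u x‖ ^ 2 := by linarith
    _ ≤ ‖c‖ * ∫ x in U, logCutoff ε (u x) * ‖u x‖ ^ 2 := by gcongr; exact Complex.re_le_norm c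
    _ ≤ ‖c‖ * ∫ x in U, ‖u x‖ ^ 2 := by
      gcongr ?_ * ?_
      exact setIntegral_mono
        (h.integrableOn_logCutoff_mul hε (h.contDiffOn.continuousOn.norm.pow 2))
        h.integrableOn_norm_sq
        fun x ↦ mul_le_of_le_one_left (sq_nonneg _) (logCutoff_le_one ε _)

theorem exists_norm_setIntegral_cutoffDefect_le (h : IsNodalDomain u U)
    (hΔ : ∀ x ∈ U, Δ u x = -(c * u x)) :
    ∃ C, ∀ ε > 0, ‖∫ x in U, cutoffDefect ε u x‖ ≤ ε * C := by
  obtain ⟨M, hM0, hM⟩ := exists_deriv_smoothTransition_le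
  refine ⟨2 * M * (‖c‖ * ∫ x in U, ‖u x‖ ^ 2), fun ε hε ↦ ?_⟩
  have hpointwise : ∀ x ∈ U, ‖cutoffDefect ε u x‖ ≤
      2 * ε * M * (logCutoff (ε / 2) (u x) * energyDensity u x) := fun x hx ↦ by
    have hderiv : deriv smoothTransition (2 + ε * Real.log (‖u x‖ ^ 2)) ≤
        M * logCutoff (ε / 2) (u x) := by
      convert hM (2 + ε * Real.log (‖u x‖ ^ 2)) using 2
      rw [logCutoff]
      ring_nf
    calc ‖cutoffDefect ε u x‖
        ≤ 2 * ε * deriv smoothTransition (2 + ε * Real.log (‖u x‖ ^ 2)) * energyDensity u x :=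
          norm_cutoffDefect_le hε.le (h.differentiableAt hx) (h.ne_zero x hx)
      _ ≤ 2 * ε * (M * logCutoff (ε / 2) (u x)) * energyDensity u x := by
        have henergy := energyDensity_nonneg u x
        gcongr
      _ = 2 * ε * M * (logCutoff (ε / 2) (u x) * energyDensity u x) := by ring
  calc ‖∫ x in U, cutoffDefect ε u x‖
      ≤ ∫ x in U, 2 * ε * M * (logCutoff (ε / 2) (u x) * energyDensity u x) :=
        norm_integral_le_of_norm_le
          ((h.integrableOn_logCutoff_mul (half_pos hε) h.continuousOn_energyDensity).const_mul _)
          (ae_restrict_of_forall_mem h.isOpen.measurableSet hpointwise)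
    _ = 2 * ε * M * ∫ x in U, logCutoff (ε / 2) (u x) * energyDensity u x :=
        integral_const_mul _ _
    _ ≤ 2 * ε * M * (‖c‖ * ∫ x in U, ‖u x‖ ^ 2) := by
        gcongr
        exact h.setIntegral_logCutoff_mul_energyDensity_le (half_pos hε) hΔ
    _ = ε * (2 * M * (‖c‖ * ∫ x in U, ‖u x‖ ^ 2)) := by ring

theorem tendsto_setIntegral_cutoffDefect (h : IsNodalDomain u U)
    (hΔ : ∀ x ∈ U, Δ u x = -(c * u x)) :
    Tendsto (fun ε ↦ ∫ x in U, cutoffDefect ε u x) (𝓝[>] 0) (𝓝 0) := by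
  obtain ⟨C, hC⟩ := h.exists_norm_setIntegral_cutoffDefect_le hΔ
  refine squeeze_zero_norm' (eventually_mem_nhdsWithin.mono hC) ?_
  have hlim : Tendsto (fun ε : ℝ ↦ ε * C) (𝓝 0) (𝓝 (0 * C)) := tendsto_id.mul_const C
  exact (zero_mul C ▸ hlim).mono_left nhdsWithin_le_nhds

end IsNodalDomain

theorem IsNodalDomain.eigenvalue_nonneg (h : IsNodalDomain u U) (hU : U.Nonempty)
    (hΔ : ∀ x ∈ U, Δ u x = -(c * u x)) : 0 ≤ c := by
  borelize E
  have hlim : Tendsto (fun ε ↦ c * (∫ x in U, logCutoff ε (u x) * ‖u x‖ ^ 2 : ℝ) -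
      ∫ x in U, cutoffDefect ε u x) (𝓝[>] 0) (𝓝 (c * (∫ x in U, ‖u x‖ ^ 2 : ℝ) - 0)) :=
    ((Complex.continuous_ofReal.tendsto _).comp
      h.tendsto_setIntegral_logCutoff_mul_norm_sq |>.const_mul c).sub
      (h.tendsto_setIntegral_cutoffDefect hΔ)
  have henergy : ∀ᶠ ε in 𝓝[>] (0 : ℝ), 0 ≤ c * (∫ x in U, logCutoff ε (u x) * ‖u x‖ ^ 2 : ℝ) -
      ∫ x in U, cutoffDefect ε u x := by
    filter_upwards [self_mem_nhdsWithin] with ε hε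
    rw [← h.energy_identity hε hΔ, add_sub_cancel_right, Complex.zero_le_real]
    exact integral_nonneg fun x ↦ mul_nonneg (logCutoff_nonneg ε _) (energyDensity_nonneg u x)
  have hc : 0 ≤ c * (∫ x in U, ‖u x‖ ^ 2 : ℝ) := by simpa using ge_of_tendsto hlim henergy
  exact le_of_mul_le_mul_right (by simpa using hc)
    (Complex.zero_lt_real.2 (h.setIntegral_norm_sq_pos hU))

theorem nonreal_not_dirichlet_eigenvalue_ball_general {u : E → ℂ} {Ω : Set E} (hΩ : IsOpen Ω)
    (hΩb : IsBounded Ω) (hu : ContDiffOn ℝ 2 u Ω) (huc : ContinuousOn u (closure Ω))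
    (hu0 : ∀ x ∈ frontier Ω, u x = 0) {k : ℂ} (hk : k.im ≠ 0)
    (hΔ : ∀ x ∈ Ω, Δ u x + k ^ 2 * u x = 0) : ∀ x ∈ closure Ω, u x = 0 := by
  intro x hx
  by_contra hux
  have hxΩ : x ∈ Ω := by_contra fun hxΩ ↦ hux (hu0 x (hΩ.frontier_eq ▸ ⟨hx, hxΩ⟩))
  exact hk <| Complex.sq_nonneg_iff.1 <|
    (isNodalDomain_setOf_ne_zero hΩ hΩb hu huc hu0).eigenvalue_nonneg ⟨x, hxΩ, hux⟩
      fun y hy ↦ eq_neg_of_add_eq_zero_left (hΔ y hy.1)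

end Energy

/-- A non-real `k` is not a Dirichlet eigenvalue of `−Δ` on a ball. -/
theorem nonreal_not_dirichlet_eigenvalue_ball
    (ρ : ℝ) (hρ : 0 < ρ)
    (u : EuclideanSpace ℝ (Fin 2) → ℂ)
    (hu_smooth : ContDiffOn ℝ 2 u (Metric.closedBall (0 : EuclideanSpace ℝ (Fin 2)) ρ))
    (hu_bdry : ∀ x ∈ Metric.sphere (0 : EuclideanSpace ℝ (Fin 2)) ρ, u x = 0)
    (k : ℂ) (hk : k.im ≠ 0)
    (hu_helmholtz : ∀ x ∈ Metric.ball (0 : EuclideanSpace ℝ (Fin 2)) ρ,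
      laplacian2 u x + k ^ 2 * u x = 0) :
    ∀ x ∈ Metric.closedBall (0 : EuclideanSpace ℝ (Fin 2)) ρ, u x = 0 := by
  have hu_ball := hu_smooth.mono Metric.ball_subset_closedBall
  rw [← frontier_ball _ hρ.ne'] at hu_bdry
  rw [← closure_ball _ hρ.ne'] at hu_smooth ⊢
  refine nonreal_not_dirichlet_eigenvalue_ball_general Metric.isOpen_ball Metric.isBounded_ball
    hu_ball hu_smooth.continuousOn hu_bdry hk fun x hx ↦ ?_
  rw [← laplacian2_eq_laplacian (hu_ball.contDiffAt (Metric.isOpen_ball.mem_nhds hx))]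
  exact hu_helmholtz x hx
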